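/- In the calculus λ_S, the β_Ω axiom is validated by applicative bisimilarity: for every pure evaluation context E with x not free in E and every term t such that both sides are closed, (λx.E[x]) t ≈_app E[t]. -/

import Mathlib

namespace LambdaS

/-- Terms of the calculus λ_S: variables, λ-abstractions, applications,
the shift operator `S k.t`, and the reset delimiter `⟨t⟩`. -/
inductive Tm : Type
  | var : ℕ → Tm
  | lam : ℕ → Tm → Tm
  | app : Tm → Tm → Tm
  | shift : ℕ → Tm → Tm
  | reset : Tm → Tm
  deriving DecidableEq

/-- A variable fresh for a finite set of variables. -/
def fresh (s : Finset ℕ) : ℕ := if h : s.Nonempty then s.max' h + 1 else 0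

namespace Tm

/-- Free variables. -/
def fv : Tm → Finset ℕ
  | var x => {x}
  | lam x t => fv t \ {x}
  | app t u => fv t ∪ fv u
  | shift k t => fv t \ {k}
  | reset t => fv t

def size : Tm → ℕ
  | var _ => 1
  | lam _ t => size t + 1
  | app t u => size t + size u + 1
  | shift _ t => size t + 1
  | reset t => size t + 1

/-- Renaming of free occurrences of a variable (used for α-renaming with a
fresh target variable). -/
def rename : Tm → ℕ → ℕ → Tm
  | var w, y, z => if w = y then var z else var w
  | lam w t, y, z => if w = y then lam w t else lam w (rename t y z)
  | app t u, y, z => app (rename t y z) (rename u y z)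
  | shift w t, y, z => if w = y then shift w t else shift w (rename t y z)
  | reset t, y, z => reset (rename t y z)

theorem size_rename (t : Tm) (y z : ℕ) : size (rename t y z) = size t := by
  induction t generalizing y z with
  | var w => simp only [rename]; split <;> rfl
  | lam w t ih => simp only [rename]; split <;> simp [size, ih]
  | app t u iht ihu => simp [rename, size, iht, ihu]
  | shift w t ih => simp only [rename]; split <;> simp [size, ih]
  | reset t ih => simp [rename, size, ih]

/-- Capture-avoiding substitution `t{v/x}` of `v` for the free occurrences of
`x` in `t`; bound variables are α-renamed when needed. -/
def subst : Tm → ℕ → Tm → Tm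
  | var w, x, v => if w = x then v else var w
  | lam y t, x, v =>
      if y = x then lam y t
      else if y ∈ fv v then
        lam (fresh (fv v ∪ fv t ∪ {x}))
          (subst (rename t y (fresh (fv v ∪ fv t ∪ {x}))) x v)
      else lam y (subst t x v)
  | app t u, x, v => app (subst t x v) (subst u x v)
  | shift y t, x, v =>
      if y = x then shift y t
      else if y ∈ fv v then
        shift (fresh (fv v ∪ fv t ∪ {x}))
          (subst (rename t y (fresh (fv v ∪ fv t ∪ {x}))) x v)
      else shift y (subst t x v)
  | reset t, x, v => reset (subst t x v)
termination_by t _ _ => size t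
decreasing_by all_goals simp [size_rename, size] <;> omega

end Tm

/-- Values: variables and λ-abstractions. -/
inductive IsValue : Tm → Prop
  | var (x : ℕ) : IsValue (Tm.var x)
  | lam (x : ℕ) (t : Tm) : IsValue (Tm.lam x t)

/-- A term is closed if it has no free variables. -/
def Closed (t : Tm) : Prop := t.fv = ∅

/-- Pure evaluation contexts E ::= □ | v E | E t. -/
inductive ECtx : Type
  | hole : ECtx
  | appR : (v : Tm) → IsValue v → ECtx → ECtx
  | appL : ECtx → Tm → ECtx

def ECtx.plug : ECtx → Tm → Tm
  | .hole, t => t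
  | .appR v _ E, t => Tm.app v (E.plug t)
  | .appL E u, t => Tm.app (E.plug t) u

def ECtx.fv : ECtx → Finset ℕ
  | .hole => ∅
  | .appR v _ E => v.fv ∪ E.fv
  | .appL E u => E.fv ∪ u.fv

/-- Composition of pure contexts: `(E.comp E').plug t = E.plug (E'.plug t)`. -/
def ECtx.comp : ECtx → ECtx → ECtx
  | .hole, E' => E'
  | .appR v hv E, E' => .appR v hv (E.comp E')
  | .appL E u, E' => .appL (E.comp E') u

/-- Evaluation contexts F ::= □ | v F | F t | ⟨F⟩. -/
inductive FCtx : Type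
  | hole : FCtx
  | appR : (v : Tm) → IsValue v → FCtx → FCtx
  | appL : FCtx → Tm → FCtx
  | reset : FCtx → FCtx

def FCtx.plug : FCtx → Tm → Tm
  | .hole, t => t
  | .appR v _ F, t => Tm.app v (F.plug t)
  | .appL F u, t => Tm.app (F.plug t) u
  | .reset F, t => Tm.reset (F.plug t)

def FCtx.fv : FCtx → Finset ℕ
  | .hole => ∅
  | .appR v _ F => v.fv ∪ F.fv
  | .appL F u => F.fv ∪ u.fv
  | .reset F => F.fv

/-- The function `λx.⟨E[x]⟩` representing the captured delimited context `E`,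
where `x` is chosen fresh (in particular `x ∉ fv E`). -/
def contFun (E : ECtx) : Tm :=
  Tm.lam (fresh E.fv) (Tm.reset (E.plug (Tm.var (fresh E.fv))))

/-- Call-by-value reduction →_v of λ_S. -/
inductive Red : Tm → Tm → Prop
  | beta (F : FCtx) (x : ℕ) (t v : Tm) :
      IsValue v →
      Red (F.plug (Tm.app (Tm.lam x t) v)) (F.plug (t.subst x v))
  | capture (F : FCtx) (E : ECtx) (k : ℕ) (t : Tm) :
      Red (F.plug (Tm.reset (E.plug (Tm.shift k t))))
          (F.plug (Tm.reset (t.subst k (contFun E))))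
  | resetVal (F : FCtx) (v : Tm) :
      IsValue v →
      Red (F.plug (Tm.reset v)) (F.plug v)

/-- A stuck term: not a value and unable to reduce. -/
def Stuck (t : Tm) : Prop := ¬ IsValue t ∧ ∀ t', ¬ Red t t'

/-- Normal forms: values and stuck terms. -/
def NormalForm (t : Tm) : Prop := IsValue t ∨ Stuck t

/-- A control-stuck term has the form E[S k.t]. -/
def ControlStuck (t : Tm) : Prop :=
  ∃ (E : ECtx) (k : ℕ) (s : Tm), t = E.plug (Tm.shift k s)

/-- Evaluation: `t ⇓ t'` iff `t →_v* t'` and `t'` is a normal form. -/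
def Evals (t t' : Tm) : Prop := Relation.ReflTransGen Red t t' ∧ NormalForm t'

/-- `t` evaluates to some value. -/
def EvalsToValue (t : Tm) : Prop := ∃ v, Relation.ReflTransGen Red t v ∧ IsValue v

/-- `t` evaluates to some control-stuck term. -/
def EvalsToStuck (t : Tm) : Prop :=
  ∃ s, Relation.ReflTransGen Red t s ∧ ControlStuck s

/-- General contexts C ::= □ | λx.C | t C | C t | S k.C | ⟨C⟩. -/
inductive Ctx : Type
  | hole : Ctx
  | lam : ℕ → Ctx → Ctx
  | appL : Ctx → Tm → Ctx
  | appR : Tm → Ctx → Ctx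
  | shift : ℕ → Ctx → Ctx
  | reset : Ctx → Ctx

def Ctx.plug : Ctx → Tm → Tm
  | .hole, t => t
  | .lam x C, t => Tm.lam x (C.plug t)
  | .appL C u, t => Tm.app (C.plug t) u
  | .appR u C, t => Tm.app u (C.plug t)
  | .shift k C, t => Tm.shift k (C.plug t)
  | .reset C, t => Tm.reset (C.plug t)

def Ctx.fv : Ctx → Finset ℕ
  | .hole => ∅
  | .lam x C => C.fv \ {x}
  | .appL C u => C.fv ∪ u.fv
  | .appR u C => u.fv ∪ C.fv
  | .shift k C => C.fv \ {k}
  | .reset C => C.fv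

/-- Contextual equivalence ≈ for the relaxed semantics (on closed terms):
tests evaluation to values and evaluation to control-stuck terms in every
closed context. -/
def CtxEquiv (t0 t1 : Tm) : Prop :=
  ∀ C : Ctx, C.fv = ∅ →
    (EvalsToValue (C.plug t0) ↔ EvalsToValue (C.plug t1)) ∧
    (EvalsToStuck (C.plug t0) ↔ EvalsToStuck (C.plug t1))

/-- Contextual equivalence ≈_p for the original semantics: tests evaluation to
values of ⟨C[·]⟩ in every closed context C. -/
def CtxEquivP (t0 t1 : Tm) : Prop :=
  ∀ C : Ctx, C.fv = ∅ →
    (EvalsToValue (Tm.reset (C.plug t0)) ↔ EvalsToValue (Tm.reset (C.plug t1)))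

/-- Contextual equivalence ≈_E testing only with closed evaluation contexts. -/
def ECtxEquiv (t0 t1 : Tm) : Prop :=
  ∀ F : FCtx, F.fv = ∅ →
    (EvalsToValue (F.plug t0) ↔ EvalsToValue (F.plug t1)) ∧
    (EvalsToStuck (F.plug t0) ↔ EvalsToStuck (F.plug t1))

/-- Applicative simulation. -/
def IsAppSim (R : Tm → Tm → Prop) : Prop :=
  ∀ t0 t1, R t0 t1 →
    (∀ t0', Red t0 t0' →
      ∃ t1', Relation.ReflTransGen Red t1 t1' ∧ R t0' t1') ∧
    (∀ x t0', t0 = Tm.lam x t0' →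
      ∃ t1', Relation.ReflTransGen Red t1 (Tm.lam x t1') ∧
        ∀ v, IsValue v → Closed v → R (t0'.subst x v) (t1'.subst x v)) ∧
    (∀ (E0 : ECtx) (k : ℕ) (t0' : Tm), t0 = E0.plug (Tm.shift k t0') →
      ∃ (E1 : ECtx) (t1' : Tm),
        Relation.ReflTransGen Red t1 (E1.plug (Tm.shift k t1')) ∧
        ∀ E : ECtx, E.fv = ∅ →
          R (Tm.reset (t0'.subst k (contFun (E.comp E0))))
            (Tm.reset (t1'.subst k (contFun (E.comp E1)))))

/-- Applicative bisimulation. -/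
def IsAppBisim (R : Tm → Tm → Prop) : Prop :=
  IsAppSim R ∧ IsAppSim (fun a b => R b a)

/-- Applicative bisimilarity ≈_app: the largest applicative bisimulation. -/
def AppBisim (t0 t1 : Tm) : Prop := ∃ R, IsAppBisim R ∧ R t0 t1

/-- Simultaneous substitution (used only with closing substitutions mapping
variables to closed values, so no capture can occur). -/
def Tm.msubst : Tm → (ℕ → Tm) → Tm
  | .var x, σ => σ x
  | .lam x t, σ => Tm.lam x (t.msubst (Function.update σ x (Tm.var x)))
  | .app t u, σ => Tm.app (t.msubst σ) (u.msubst σ)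
  | .shift k t, σ => Tm.shift k (t.msubst (Function.update σ k (Tm.var k)))
  | .reset t, σ => Tm.reset (t.msubst σ)

/-- Open extension of a relation on closed terms: relate `t0σ` and `t1σ` for
every substitution σ mapping variables to closed values. -/
def OpenExt (R : Tm → Tm → Prop) (t0 t1 : Tm) : Prop :=
  ∀ σ : ℕ → Tm, (∀ x, IsValue (σ x) ∧ Closed (σ x)) →
    R (t0.msubst σ) (t1.msubst σ)

/-- ω := λx.x x. -/
def omegaTm : Tm := Tm.lam 0 (Tm.app (Tm.var 0) (Tm.var 0))

/-- Ω := ω ω, a diverging term. -/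
def OmegaTm : Tm := Tm.app omegaTm omegaTm

/-!
Let `⊳` be the compatible relation generated by the rule that `(λx.E[x]) t ⊳ t'` whenever
`E[t] ⊳ t'` and `x ∉ fv E`. Its restriction to closed terms is an applicative bisimulation.
A term on the left and its counterpart on the right evaluate the same subterms in the same order:
in `(λx.E[x]) t` and in `E[t]` alike, `t` is evaluated first. If `t` becomes a value `v`, one more
β-step on the left yields `E[v]`; if it gets stuck at `F[S k.s]`, the captured contexts are
`(λx.E[x]) F` and `E[F]`, which `⊳` relates whatever is put in the hole.
-/

open Relation

local infix:50 " ⟶* " => ReflTransGen Red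

/-! ### Substitution of closed values -/

theorem Tm.subst_lam_of_closed {v : Tm} (hv : Closed v) (y : ℕ) (t : Tm) (x : ℕ) :
    (Tm.lam y t).subst x v = if y = x then Tm.lam y t else Tm.lam y (t.subst x v) := by
  rw [Tm.subst, show v.fv = ∅ from hv, if_neg (Finset.notMem_empty y)]

theorem Tm.subst_shift_of_closed {v : Tm} (hv : Closed v) (k : ℕ) (t : Tm) (x : ℕ) :
    (Tm.shift k t).subst x v = if k = x then Tm.shift k t else Tm.shift k (t.subst x v) := by
  rw [Tm.subst, show v.fv = ∅ from hv, if_neg (Finset.notMem_empty k)]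

theorem Tm.fv_subst {v : Tm} (hv : Closed v) (t : Tm) (x : ℕ) :
    (t.subst x v).fv = t.fv \ {x} := by
  have hv' : v.fv = ∅ := hv
  induction t with
  | var w => rw [Tm.subst]; split <;> grind [Tm.fv]
  | lam y t ih => rw [subst_lam_of_closed hv]; split <;> grind [Tm.fv]
  | app t u iht ihu => grind [Tm.subst, Tm.fv]
  | shift k t ih => rw [subst_shift_of_closed hv]; split <;> grind [Tm.fv]
  | reset t ih => rwa [Tm.subst]

theorem Tm.subst_eq_self {v : Tm} (hv : Closed v) {t : Tm} {x : ℕ} (h : x ∉ t.fv) :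
    t.subst x v = t := by
  induction t with
  | var w => grind [Tm.subst, Tm.fv]
  | lam y t ih => rw [subst_lam_of_closed hv]; grind [Tm.fv]
  | app t u iht ihu => grind [Tm.subst, Tm.fv]
  | shift k t ih => rw [subst_shift_of_closed hv]; grind [Tm.fv]
  | reset t ih => rw [Tm.subst, ih h]

theorem IsValue.subst {w v : Tm} (hw : IsValue w) (hv : IsValue v) (x : ℕ) :
    IsValue (w.subst x v) := by
  cases hw with
  | var y => rw [Tm.subst]; split; exacts [hv, .var y]
  | lam y t => rw [Tm.subst]; split_ifs <;> exact .lam _ _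

/-- Substitution `E{v/x}` of a value in a pure context. Values are closed under substitution of
values only, so `v` has to be a value for the result to be a pure context. -/
def ECtx.subst (x : ℕ) {v : Tm} (hv : IsValue v) : ECtx → ECtx
  | .hole => .hole
  | .appR w hw E => .appR (w.subst x v) (hw.subst hv x) (E.subst x hv)
  | .appL E u => .appL (E.subst x hv) (u.subst x v)

theorem ECtx.subst_plug (x : ℕ) {v : Tm} (hv : IsValue v) (E : ECtx) (t : Tm) :
    (E.plug t).subst x v = (E.subst x hv).plug (t.subst x v) := by
  induction E with
  | hole => rfl
  | appR w _ E ih => simp only [plug, subst, Tm.subst, ih]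
  | appL E u ih => simp only [plug, subst, Tm.subst, ih]

theorem ECtx.fv_subst (x : ℕ) {v : Tm} (hv : IsValue v) (hc : Closed v) (E : ECtx) :
    (E.subst x hv).fv = E.fv \ {x} := by
  induction E with
  | hole => rfl
  | appR w hw E ih => simp only [fv, subst, ih, Tm.fv_subst hc, Finset.union_sdiff_distrib]
  | appL E u ih => simp only [fv, subst, ih, Tm.fv_subst hc, Finset.union_sdiff_distrib]

theorem ECtx.subst_eq_self {x : ℕ} {v : Tm} (hv : IsValue v) (hc : Closed v) {E : ECtx}
    (h : x ∉ E.fv) : E.subst x hv = E := by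
  induction E with
  | hole => rfl
  | appR w hw E ih =>
    simp only [fv, Finset.mem_union, not_or] at h
    simp only [subst, ih h.2, Tm.subst_eq_self hc h.1]
  | appL E u ih =>
    simp only [fv, Finset.mem_union, not_or] at h
    simp only [subst, ih h.1, Tm.subst_eq_self hc h.2]

theorem ECtx.subst_plug_var {E : ECtx} {x : ℕ} (hx : x ∉ E.fv) {v : Tm} (hv : IsValue v)
    (hc : Closed v) : (E.plug (.var x)).subst x v = E.plug v := by
  rw [subst_plug x hv, subst_eq_self hv hc hx, Tm.subst, if_pos rfl]

/-! ### Contexts and closed terms -/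

theorem ECtx.fv_plug (E : ECtx) (t : Tm) : (E.plug t).fv = E.fv ∪ t.fv := by
  induction E with
  | hole => exact (Finset.empty_union _).symm
  | appR v hv E ih => simp only [plug, fv, Tm.fv, ih, Finset.union_assoc]
  | appL E u ih => simp only [plug, fv, Tm.fv, ih, Finset.union_right_comm]

theorem FCtx.fv_plug (F : FCtx) (t : Tm) : (F.plug t).fv = F.fv ∪ t.fv := by
  induction F with
  | hole => exact (Finset.empty_union _).symm
  | appR v hv F ih => simp only [plug, fv, Tm.fv, ih, Finset.union_assoc]
  | appL F u ih => simp only [plug, fv, Tm.fv, ih, Finset.union_right_comm]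
  | reset _ ih => exact ih

theorem ECtx.comp_plug (E E' : ECtx) (t : Tm) : (E.comp E').plug t = E.plug (E'.plug t) := by
  induction E with
  | hole => rfl
  | appR v hv E ih => simp only [comp, plug, ih]
  | appL E u ih => simp only [comp, plug, ih]

theorem ECtx.fv_comp (E E' : ECtx) : (E.comp E').fv = E.fv ∪ E'.fv := by
  induction E with
  | hole => exact (Finset.empty_union _).symm
  | appR v hv E ih => simp only [comp, fv, ih, Finset.union_assoc]
  | appL E u ih => simp only [comp, fv, ih, Finset.union_right_comm]

theorem closed_lam {x : ℕ} {t : Tm} : Closed (.lam x t) ↔ t.fv ⊆ {x} :=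
  Finset.sdiff_eq_empty_iff_subset

theorem closed_shift {k : ℕ} {t : Tm} : Closed (.shift k t) ↔ t.fv ⊆ {k} :=
  Finset.sdiff_eq_empty_iff_subset

theorem closed_app {t u : Tm} : Closed (.app t u) ↔ Closed t ∧ Closed u :=
  Finset.union_eq_empty

theorem closed_reset {t : Tm} : Closed (.reset t) ↔ Closed t := Iff.rfl

theorem ECtx.closed_plug {E : ECtx} {t : Tm} : Closed (E.plug t) ↔ E.fv = ∅ ∧ Closed t := by
  rw [Closed, fv_plug, Finset.union_eq_empty, Closed]

theorem FCtx.closed_plug {F : FCtx} {t : Tm} : Closed (F.plug t) ↔ F.fv = ∅ ∧ Closed t := by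
  rw [Closed, fv_plug, Finset.union_eq_empty, Closed]

theorem closed_subst {x : ℕ} {t v : Tm} (ht : t.fv ⊆ {x}) (hv : Closed v) :
    Closed (t.subst x v) := by
  rw [Closed, Tm.fv_subst hv, Finset.sdiff_eq_empty_iff_subset.2 ht]

theorem closed_contFun {E : ECtx} (hE : E.fv = ∅) : Closed (contFun E) := by
  rw [contFun, closed_lam, Tm.fv, ECtx.fv_plug, hE, Finset.empty_union, Tm.fv]

theorem closed_reset_subst_contFun {E : ECtx} {k : ℕ} {t : Tm}
    (hc : Closed (E.plug (.shift k t))) : Closed (.reset (t.subst k (contFun E))) :=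
  have ⟨hE, ht⟩ := ECtx.closed_plug.1 hc
  closed_subst (closed_shift.1 ht) (closed_contFun hE)

/-! ### Reduction -/

namespace Red

theorem closed {t t' : Tm} (h : Red t t') (hc : Closed t) : Closed t' := by
  cases h with
  | beta F x t v hv =>
    obtain ⟨hF, hr⟩ := FCtx.closed_plug.1 hc
    obtain ⟨ht, hv⟩ := closed_app.1 hr
    exact FCtx.closed_plug.2 ⟨hF, closed_subst (closed_lam.1 ht) hv⟩
  | capture F E k t =>
    obtain ⟨hF, hr⟩ := FCtx.closed_plug.1 hc
    exact FCtx.closed_plug.2 ⟨hF, closed_reset_subst_contFun hr⟩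
  | resetVal _ v hv => rwa [FCtx.closed_plug, closed_reset, ← FCtx.closed_plug] at hc

theorem appL {t t' : Tm} (h : Red t t') (u : Tm) : Red (.app t u) (.app t' u) := by
  cases h with
  | beta F x s v hv => exact .beta (.appL F u) x s v hv
  | capture F E k s => exact .capture (.appL F u) E k s
  | resetVal F v hv => exact .resetVal (.appL F u) v hv

theorem appR {t t' v : Tm} (hv : IsValue v) (h : Red t t') : Red (.app v t) (.app v t') := by
  cases h with
  | beta F x s w hw => exact .beta (.appR v hv F) x s w hw
  | capture F E k s => exact .capture (.appR v hv F) E k s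
  | resetVal F w hw => exact .resetVal (.appR v hv F) w hw

theorem reset {t t' : Tm} (h : Red t t') : Red (.reset t) (.reset t') := by
  cases h with
  | beta F x s v hv => exact .beta (.reset F) x s v hv
  | capture F E k s => exact .capture (.reset F) E k s
  | resetVal F v hv => exact .resetVal (.reset F) v hv

theorem plug {t t' : Tm} (h : Red t t') (E : ECtx) : Red (E.plug t) (E.plug t') := by
  induction E with
  | hole => exact h
  | appR v hv E ih => exact ih.appR hv
  | appL E u ih => exact ih.appL u

end Red

/-- The possible last steps of a derivation of `t →_v t'` in structural operational semantics: a
basic reduction at the root, or a reduction of an immediate subterm. Case analysis on it replaces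
case analysis on the evaluation context `F`. -/
inductive StructStep : Tm → Tm → Prop
  | beta {x : ℕ} {t v : Tm} : IsValue v → StructStep (.app (.lam x t) v) (t.subst x v)
  | capture {E : ECtx} {k : ℕ} {t : Tm} :
      StructStep (.reset (E.plug (.shift k t))) (.reset (t.subst k (contFun E)))
  | resetVal {v : Tm} : IsValue v → StructStep (.reset v) v
  | appL {t t' u : Tm} : Red t t' → StructStep (.app t u) (.app t' u)
  | appR {v t t' : Tm} : IsValue v → Red t t' → StructStep (.app v t) (.app v t')
  | reset {t t' : Tm} : Red t t' → StructStep (.reset t) (.reset t')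

theorem Red.structStep {t t' : Tm} (h : Red t t') : StructStep t t' := by
  cases h with
  | beta F x t v hv =>
    cases F with
    | hole => exact .beta hv
    | appR w hw F => exact .appR hw (.beta F x t v hv)
    | appL F u => exact .appL (.beta F x t v hv)
    | reset F => exact .reset (.beta F x t v hv)
  | capture F E k t =>
    cases F with
    | hole => exact .capture
    | appR w hw F => exact .appR hw (.capture F E k t)
    | appL F u => exact .appL (.capture F E k t)
    | reset F => exact .reset (.capture F E k t)
  | resetVal F v hv =>
    cases F with
    | hole => exact .resetVal hv
    | appR w hw F => exact .appR hw (.resetVal F v hv)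
    | appL F u => exact .appL (.resetVal F v hv)
    | reset F => exact .reset (.resetVal F v hv)

theorem IsValue.not_red {v t : Tm} (hv : IsValue v) : ¬ Red v t := by
  intro h
  cases hv <;> cases h.structStep

theorem closed_of_reds {t t' : Tm} (h : t ⟶* t') (hc : Closed t) : Closed t' := by
  induction h with
  | refl => exact hc
  | tail _ h ih => exact h.closed ih

theorem reds_appL {t t' : Tm} (h : t ⟶* t') (u : Tm) : .app t u ⟶* .app t' u :=
  ReflTransGen.lift (fun t => Tm.app t u) (fun _ _ h => h.appL u) _ _ h

theorem reds_appR {t t' v : Tm} (hv : IsValue v) (h : t ⟶* t') : .app v t ⟶* .app v t' :=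
  ReflTransGen.lift (Tm.app v) (fun _ _ h => h.appR hv) _ _ h

theorem reds_reset {t t' : Tm} (h : t ⟶* t') : .reset t ⟶* .reset t' :=
  ReflTransGen.lift Tm.reset (fun _ _ h => h.reset) _ _ h

/-! ### Reduction under a pure context -/

namespace ECtx

theorem isValue_of_plug {E : ECtx} {t : Tm} (h : IsValue (E.plug t)) : IsValue t := by
  cases E with
  | hole => exact h
  | appR | appL => cases h

theorem not_isValue_plug_shift {E : ECtx} {k : ℕ} {s : Tm} : ¬ IsValue (E.plug (.shift k s)) :=
  fun h => nomatch isValue_of_plug h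

theorem exists_of_app_eq_plug_shift {t u : Tm} {E : ECtx} {k : ℕ} {s : Tm}
    (h : .app t u = E.plug (.shift k s)) :
    (∃ F : ECtx, E = .appL F u ∧ t = F.plug (.shift k s)) ∨
      ∃ (ht : IsValue t) (F : ECtx), E = .appR t ht F ∧ u = F.plug (.shift k s) := by
  cases E with
  | hole => cases h
  | appR v hv F => cases h; exact .inr ⟨hv, F, rfl, rfl⟩
  | appL F u => cases h; exact .inl ⟨F, rfl, rfl⟩

theorem exists_comp_of_plug_eq_plug_shift {t : Tm} (ht : ¬ IsValue t) {E E' : ECtx} {k : ℕ}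
    {s : Tm} (h : E.plug t = E'.plug (.shift k s)) :
    ∃ F : ECtx, t = F.plug (.shift k s) ∧ E' = E.comp F := by
  induction E generalizing E' with
  | hole => exact ⟨E', h, rfl⟩
  | appR v hv E ih =>
    rcases exists_of_app_eq_plug_shift h with ⟨F, -, rfl⟩ | ⟨_, F, rfl, hF⟩
    · exact absurd hv not_isValue_plug_shift
    · obtain ⟨G, hG, rfl⟩ := ih hF
      exact ⟨G, hG, rfl⟩
  | appL E u ih =>
    rcases exists_of_app_eq_plug_shift h with ⟨F, rfl, hF⟩ | ⟨hE, -⟩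
    · obtain ⟨G, hG, rfl⟩ := ih hF
      exact ⟨G, hG, rfl⟩
    · exact absurd (isValue_of_plug hE) ht

theorem exists_red_of_red_plug {t : Tm} (ht : ¬ IsValue t) {E : ECtx} {r : Tm}
    (h : Red (E.plug t) r) : ∃ t', Red t t' ∧ r = E.plug t' := by
  induction E generalizing r with
  | hole => exact ⟨r, h, rfl⟩
  | appR v hv E ih =>
    cases h.structStep with
    | beta hE => exact absurd (isValue_of_plug hE) ht
    | appL hstep => exact absurd hstep hv.not_red
    | appR _ hstep =>
      obtain ⟨t', h', rfl⟩ := ih hstep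
      exact ⟨t', h', rfl⟩
  | appL E u ih =>
    generalize hp : E.plug t = p at ih
    rw [plug, hp] at h
    cases h.structStep with
    | beta => exact absurd (isValue_of_plug (hp ▸ IsValue.lam _ _)) ht
    | appL hstep =>
      obtain ⟨t', h', rfl⟩ := ih hstep
      exact ⟨t', h', rfl⟩
    | appR hE => exact absurd (isValue_of_plug (hp ▸ hE)) ht

theorem reds_plug_cases {E : ECtx} {t r : Tm} (h : E.plug t ⟶* r) :
    (∃ t', t ⟶* t' ∧ ¬ IsValue t' ∧ r = E.plug t') ∨
      ∃ v, t ⟶* v ∧ IsValue v ∧ E.plug v ⟶* r := by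
  induction h with
  | refl =>
    by_cases ht : IsValue t
    · exact .inr ⟨t, .refl, ht, .refl⟩
    · exact .inl ⟨t, .refl, ht, rfl⟩
  | tail _ hr ih =>
    rcases ih with ⟨t', htt', ht', rfl⟩ | ⟨v, htv, hv, hvr⟩
    · obtain ⟨u, hu, rfl⟩ := exists_red_of_red_plug ht' hr
      by_cases hv : IsValue u
      · exact .inr ⟨u, htt'.tail hu, hv, .refl⟩
      · exact .inl ⟨u, htt'.tail hu, hv, rfl⟩
    · exact .inr ⟨v, htv, hv, hvr.tail hr⟩

end ECtx

theorem reds_redex_or_exists_of_reds_plug {E : ECtx} {x : ℕ} (hx : x ∉ E.fv) {t r : Tm}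
    (hc : Closed t) (h : E.plug t ⟶* r) :
    .app (.lam x (E.plug (.var x))) t ⟶* r ∨
      ∃ t', t ⟶* t' ∧ ¬ IsValue t' ∧ r = E.plug t' := by
  rcases ECtx.reds_plug_cases h with ht' | ⟨v, htv, hv, hvr⟩
  · exact .inr ht'
  · have hβ : Red (.app (.lam x (E.plug (.var x))) v) (E.plug v) :=
      ECtx.subst_plug_var hx hv (closed_of_reds htv hc) ▸ .beta .hole x _ v hv
    exact .inl (((reds_appR (.lam _ _) htv).tail hβ).trans hvr)

/-! ### The compatible closure of β_Ω -/

/-- The compatible closure of the β_Ω axiom, oriented from `(λx.E[x]) t` to `E[t]`. The rule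
`contract` allows further contractions in `E[t]`, including ones inside `E`, so that no relation
on contexts needs to be defined simultaneously. -/
inductive BetaOmega : Tm → Tm → Prop
  | var (x : ℕ) : BetaOmega (.var x) (.var x)
  | lam (x : ℕ) {t t' : Tm} : BetaOmega t t' → BetaOmega (.lam x t) (.lam x t')
  | app {t t' u u' : Tm} : BetaOmega t t' → BetaOmega u u' → BetaOmega (.app t u) (.app t' u')
  | shift (k : ℕ) {t t' : Tm} : BetaOmega t t' → BetaOmega (.shift k t) (.shift k t')
  | reset {t t' : Tm} : BetaOmega t t' → BetaOmega (.reset t) (.reset t')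
  | contract {E : ECtx} {x : ℕ} {t t' : Tm} : x ∉ E.fv → BetaOmega (E.plug t) t' →
      BetaOmega (.app (.lam x (E.plug (.var x))) t) t'

/-- Pure contexts that are related by β_Ω whichever related terms are put in their holes. -/
def BetaOmegaCtx (E E' : ECtx) : Prop :=
  ∀ ⦃t t' : Tm⦄, BetaOmega t t' → BetaOmega (E.plug t) (E'.plug t')

namespace BetaOmega

theorem refl (t : Tm) : BetaOmega t t := by
  induction t with
  | var x => exact .var x
  | lam x t ih => exact .lam x ih
  | app t u iht ihu => exact .app iht ihu
  | shift k t ih => exact .shift k ih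
  | reset t ih => exact .reset ih

theorem plug {t t' : Tm} (h : BetaOmega t t') (E : ECtx) :
    BetaOmega (E.plug t) (E.plug t') := by
  induction E with
  | hole => exact h
  | appR v _ E ih => exact .app (refl v) ih
  | appL E u ih => exact .app ih (refl u)

theorem fv_eq {t t' : Tm} (h : BetaOmega t t') : t.fv = t'.fv := by
  induction h with
  | var x => rfl
  | lam x _ ih => simp only [Tm.fv, ih]
  | app _ _ iht ihu => simp only [Tm.fv, iht, ihu]
  | shift k _ ih => simp only [Tm.fv, ih]
  | reset _ ih => exact ih
  | contract hx _ ih =>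
    rw [← ih]
    simp only [Tm.fv, ECtx.fv_plug, Finset.union_sdiff_cancel_right
      (Finset.disjoint_singleton_right.2 hx)]

theorem closed {t t' : Tm} (h : BetaOmega t t') (hc : Closed t) : Closed t' :=
  h.fv_eq.symm.trans hc

theorem closed_plug_of_closed_redex {E : ECtx} {x : ℕ} {t : Tm} (hx : x ∉ E.fv)
    (hc : Closed (.app (.lam x (E.plug (.var x))) t)) : Closed (E.plug t) :=
  (contract hx (refl _)).closed hc

theorem isValue {v t : Tm} (h : BetaOmega v t) (hv : IsValue v) : IsValue t := by
  cases hv <;> cases h <;> constructor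

theorem exists_of_lam {x : ℕ} {s t : Tm} (h : BetaOmega (.lam x s) t) :
    ∃ s', t = .lam x s' ∧ BetaOmega s s' := by
  cases h with
  | lam _ hs => exact ⟨_, rfl, hs⟩

theorem exists_of_isValue_of_lam {x : ℕ} {v s : Tm} (h : BetaOmega v (.lam x s))
    (hv : IsValue v) : ∃ s', v = .lam x s' ∧ BetaOmega s' s := by
  cases hv with
  | var => cases h
  | lam => cases h with | lam _ hs => exact ⟨_, rfl, hs⟩

theorem subst {t t' : Tm} (h : BetaOmega t t') (y : ℕ) {v v' : Tm} (hv : IsValue v)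
    (hc : Closed v) (hvv' : BetaOmega v v') : BetaOmega (t.subst y v) (t'.subst y v') := by
  have hc' : Closed v' := hvv'.closed hc
  induction h with
  | var x =>
    rw [Tm.subst, Tm.subst]
    split
    exacts [hvv', .var x]
  | lam x h ih =>
    rw [Tm.subst_lam_of_closed hc, Tm.subst_lam_of_closed hc']
    split
    exacts [.lam x h, .lam x ih]
  | app _ _ iht ihu =>
    rw [Tm.subst, Tm.subst]
    exact .app iht ihu
  | shift k h ih =>
    rw [Tm.subst_shift_of_closed hc, Tm.subst_shift_of_closed hc']
    split
    exacts [.shift k h, .shift k ih]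
  | reset _ ih =>
    rw [Tm.subst, Tm.subst]
    exact .reset ih
  | @contract E x t t' hx _ ih =>
    have hlam : (Tm.lam x (E.plug (.var x))).subst y v
        = .lam x ((E.subst y hv).plug (.var x)) := by
      rw [Tm.subst_lam_of_closed hc]
      split_ifs with hxy
      · rw [ECtx.subst_eq_self hv hc (hxy ▸ hx)]
      · rw [ECtx.subst_plug y hv, Tm.subst, if_neg hxy]
    have hx' : x ∉ (E.subst y hv).fv := by
      rw [ECtx.fv_subst y hv hc]
      exact fun hmem => hx (Finset.mem_sdiff.1 hmem).1
    rw [Tm.subst, hlam]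
    exact .contract hx' (ECtx.subst_plug y hv E t ▸ ih)

end BetaOmega

namespace BetaOmegaCtx

variable {E E' : ECtx}

theorem comp (h : BetaOmegaCtx E E') (G : ECtx) : BetaOmegaCtx (G.comp E) (G.comp E') := by
  intro t t' ht
  rw [ECtx.comp_plug, ECtx.comp_plug]
  exact (h ht).plug G

theorem fv_eq (h : BetaOmegaCtx E E') : E.fv = E'.fv := by
  have hω : omegaTm.fv = ∅ := rfl
  have hfv := (h (.refl omegaTm)).fv_eq
  rwa [ECtx.fv_plug, ECtx.fv_plug, hω, Finset.union_empty, Finset.union_empty] at hfv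

theorem betaOmega_contFun (h : BetaOmegaCtx E E') : BetaOmega (contFun E) (contFun E') := by
  rw [contFun, contFun, h.fv_eq]
  exact .lam _ (.reset (h (.var _)))

theorem betaOmega_capture (h : BetaOmegaCtx E E') (hE : E.fv = ∅) {s s' : Tm}
    (hs : BetaOmega s s') (k : ℕ) :
    BetaOmega (.reset (s.subst k (contFun E))) (.reset (s'.subst k (contFun E'))) :=
  .reset (hs.subst k (.lam _ _) (closed_contFun hE) h.betaOmega_contFun)

theorem appR_of_comp {x : ℕ} {F : ECtx} (hx : x ∉ E.fv) (h : BetaOmegaCtx (E.comp F) E') :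
    BetaOmegaCtx (.appR (.lam x (E.plug (.var x))) (.lam _ _) F) E' :=
  fun t _ ht => .contract hx (ECtx.comp_plug E F t ▸ h ht)

end BetaOmegaCtx

namespace BetaOmega

/-! ### The right-hand side simulates the left-hand side -/

theorem exists_of_plug_shift {E : ECtx} {k : ℕ} {s t' : Tm}
    (h : BetaOmega (E.plug (.shift k s)) t') :
    ∃ E' s', t' = ECtx.plug E' (.shift k s') ∧ BetaOmega s s' ∧ BetaOmegaCtx E E' := by
  generalize ht : E.plug (.shift k s) = t at h
  induction h generalizing E with
  | var | lam | reset => cases E <;> cases ht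
  | shift _ hs => cases E <;> cases ht; exact ⟨.hole, _, rfl, hs, fun _ _ h => h⟩
  | app ha hb iha ihb =>
    rcases ECtx.exists_of_app_eq_plug_shift ht.symm with ⟨F, rfl, hF⟩ | ⟨hv, F, rfl, hF⟩
    · obtain ⟨F', s', rfl, hs, hFF'⟩ := iha hF.symm
      exact ⟨.appL F' _, s', rfl, hs, fun _ _ hu => .app (hFF' hu) hb⟩
    · obtain ⟨F', s', rfl, hs, hFF'⟩ := ihb hF.symm
      exact ⟨.appR _ (ha.isValue hv) F', s', rfl, hs, fun _ _ hu => .app ha (hFF' hu)⟩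
  | @contract G x u u' hx _ ih =>
    rcases ECtx.exists_of_app_eq_plug_shift ht.symm with ⟨F, -, hF⟩ | ⟨_, F, rfl, rfl⟩
    · exact absurd (hF ▸ IsValue.lam _ _) ECtx.not_isValue_plug_shift
    · obtain ⟨E', s', rfl, hs, hFE'⟩ := ih (ECtx.comp_plug G F _)
      exact ⟨E', s', rfl, hs, hFE'.appR_of_comp hx⟩

theorem exists_reds_of_red_left {t t' : Tm} (h : BetaOmega t t') (hc : Closed t) {r : Tm}
    (hr : Red t r) : ∃ r', t' ⟶* r' ∧ BetaOmega r r' := by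
  induction h generalizing r with
  | var | lam | shift => cases hr.structStep
  | app ha hb iha ihb =>
    obtain ⟨hca, hcb⟩ := closed_app.1 hc
    cases hr.structStep with
    | beta hv =>
      obtain ⟨s', rfl, hs⟩ := ha.exists_of_lam
      exact ⟨_, .single (.beta .hole _ s' _ (hb.isValue hv)), hs.subst _ hv hcb hb⟩
    | appL hstep =>
      obtain ⟨r', hr', h⟩ := iha hca hstep
      exact ⟨_, reds_appL hr' _, .app h hb⟩
    | appR hv hstep =>
      obtain ⟨r', hr', h⟩ := ihb hcb hstep
      exact ⟨_, reds_appR (ha.isValue hv) hr', .app ha h⟩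
  | reset h ih =>
    cases hr.structStep with
    | capture =>
      obtain ⟨E', s', rfl, hs, hE⟩ := h.exists_of_plug_shift
      exact ⟨_, .single (.capture .hole E' _ s'),
        hE.betaOmega_capture (ECtx.closed_plug.1 hc).1 hs _⟩
    | resetVal hv => exact ⟨_, .single (.resetVal .hole _ (h.isValue hv)), h⟩
    | reset hstep =>
      obtain ⟨r', hr', h⟩ := ih hc hstep
      exact ⟨_, reds_reset hr', .reset h⟩
  | @contract E x u u' hx h ih =>
    obtain ⟨-, hcu⟩ := closed_app.1 hc
    cases hr.structStep with
    | beta hv => exact ⟨_, .refl, (ECtx.subst_plug_var hx hv hcu).symm ▸ h⟩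
    | appL hstep => exact absurd hstep (IsValue.lam _ _).not_red
    | appR _ hstep =>
      obtain ⟨r', hr', h⟩ := ih (closed_plug_of_closed_redex hx hc) (hstep.plug E)
      exact ⟨r', hr', .contract hx h⟩

/-! ### The left-hand side simulates the right-hand side -/

theorem exists_reds_isValue {t v : Tm} (h : BetaOmega t v) (hc : Closed t) (hv : IsValue v) :
    ∃ w, t ⟶* w ∧ IsValue w ∧ BetaOmega w v := by
  induction h with
  | var x => exact ⟨_, .refl, .var x, .var x⟩
  | lam x h => exact ⟨_, .refl, .lam x _, .lam x h⟩
  | app | shift | reset => cases hv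
  | @contract E x u u' hx _ ih =>
    obtain ⟨w, hw, hwv, hwu'⟩ := ih (closed_plug_of_closed_redex hx hc) hv
    rcases reds_redex_or_exists_of_reds_plug hx (closed_app.1 hc).2 hw with
      hw | ⟨t', -, ht', rfl⟩
    · exact ⟨w, hw, hwv, hwu'⟩
    · exact absurd (ECtx.isValue_of_plug hwv) ht'

theorem exists_reds_plug_shift {t : Tm} {E' : ECtx} {k : ℕ} {s' : Tm}
    (h : BetaOmega t (E'.plug (.shift k s'))) (hc : Closed t) :
    ∃ E s, t ⟶* ECtx.plug E (.shift k s) ∧ BetaOmega s s' ∧ BetaOmegaCtx E E' := by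
  generalize ht' : E'.plug (.shift k s') = t' at h
  induction h generalizing E' with
  | var | lam | reset => cases E' <;> cases ht'
  | shift _ hs => cases E' <;> cases ht'; exact ⟨.hole, _, .refl, hs, fun _ _ h => h⟩
  | @app a a' b b' ha hb iha ihb =>
    obtain ⟨hca, hcb⟩ := closed_app.1 hc
    rcases ECtx.exists_of_app_eq_plug_shift ht'.symm with ⟨F', rfl, hF'⟩ | ⟨hv, F', rfl, hF'⟩
    · obtain ⟨F, s, hF, hs, hFF'⟩ := iha hca hF'.symm
      exact ⟨.appL F b, s, reds_appL hF b, hs, fun _ _ hu => .app (hFF' hu) hb⟩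
    · obtain ⟨w, haw, hw, hwa'⟩ := ha.exists_reds_isValue hca hv
      obtain ⟨F, s, hF, hs, hFF'⟩ := ihb hcb hF'.symm
      exact ⟨.appR w hw F, s, (reds_appL haw b).trans (reds_appR hw hF), hs,
        fun _ _ hu => .app hwa' (hFF' hu)⟩
  | @contract G x u u' hx _ ih =>
    obtain ⟨E, s, hE, hs, hEE'⟩ := ih (closed_plug_of_closed_redex hx hc) ht'
    rcases reds_redex_or_exists_of_reds_plug hx (closed_app.1 hc).2 hE with
      hE | ⟨t', hut', ht', hGE⟩
    · exact ⟨E, s, hE, hs, hEE'⟩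
    · obtain ⟨F, rfl, rfl⟩ := ECtx.exists_comp_of_plug_eq_plug_shift ht' hGE.symm
      exact ⟨.appR _ (.lam _ _) F, s, reds_appR (.lam _ _) hut', hs, hEE'.appR_of_comp hx⟩

theorem exists_reds_of_red_right {t t' : Tm} (h : BetaOmega t t') (hc : Closed t) {r' : Tm}
    (hr : Red t' r') : ∃ r, t ⟶* r ∧ BetaOmega r r' := by
  induction h generalizing r' with
  | var | lam | shift => cases hr.structStep
  | @app a a' b b' ha hb iha ihb =>
    obtain ⟨hca, hcb⟩ := closed_app.1 hc
    cases hr.structStep with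
    | beta hv =>
      obtain ⟨w, haw, hw, hwa'⟩ := ha.exists_reds_isValue hca (.lam _ _)
      obtain ⟨s, rfl, hs⟩ := hwa'.exists_of_isValue_of_lam hw
      obtain ⟨v, hbv, hv, hvb'⟩ := hb.exists_reds_isValue hcb hv
      exact ⟨_, ((reds_appL haw b).trans (reds_appR hw hbv)).tail (.beta .hole _ s v hv),
        hs.subst _ hv (closed_of_reds hbv hcb) hvb'⟩
    | appL hstep =>
      obtain ⟨r, hr, h⟩ := iha hca hstep
      exact ⟨_, reds_appL hr b, .app h hb⟩
    | appR hv hstep =>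
      obtain ⟨w, haw, hw, hwa'⟩ := ha.exists_reds_isValue hca hv
      obtain ⟨r, hr, h⟩ := ihb hcb hstep
      exact ⟨_, (reds_appL haw b).trans (reds_appR hw hr), .app hwa' h⟩
  | reset h ih =>
    cases hr.structStep with
    | capture =>
      obtain ⟨E, s, hE, hs, hEE'⟩ := h.exists_reds_plug_shift hc
      have hcE : E.fv = ∅ := (ECtx.closed_plug.1 (closed_of_reds hE hc)).1
      exact ⟨_, (reds_reset hE).tail (.capture .hole E _ s), hEE'.betaOmega_capture hcE hs _⟩
    | resetVal hv =>
      obtain ⟨w, hw, hwv, hww'⟩ := h.exists_reds_isValue hc hv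
      exact ⟨w, (reds_reset hw).tail (.resetVal .hole w hwv), hww'⟩
    | reset hstep =>
      obtain ⟨r, hr, h⟩ := ih hc hstep
      exact ⟨_, reds_reset hr, .reset h⟩
  | @contract E x u u' hx _ ih =>
    obtain ⟨r, hr, hrr'⟩ := ih (closed_plug_of_closed_redex hx hc) hr
    rcases reds_redex_or_exists_of_reds_plug hx (closed_app.1 hc).2 hr with
      hr | ⟨u'', hu, -, rfl⟩
    · exact ⟨r, hr, hrr'⟩
    · exact ⟨_, reds_appR (.lam _ _) hu, .contract hx hrr'⟩

end BetaOmega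

/-- The restriction of `BetaOmega` to closed terms: the applicative bisimulation that witnesses
the β_Ω axiom. Related terms have the same free variables, so only `t` is required to be closed. -/
def ClosedBetaOmega (t t' : Tm) : Prop := Closed t ∧ BetaOmega t t'

namespace ClosedBetaOmega

theorem subst {x : ℕ} {s s' : Tm} (hc : Closed (.lam x s)) (hs : BetaOmega s s') {v : Tm}
    (hv : IsValue v) (hvc : Closed v) : ClosedBetaOmega (s.subst x v) (s'.subst x v) :=
  ⟨closed_subst (closed_lam.1 hc) hvc, hs.subst x hv hvc (.refl v)⟩

theorem capture {E E' : ECtx} {k : ℕ} {s s' : Tm} (hc : Closed (E.plug (.shift k s)))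
    (hs : BetaOmega s s') (hE : BetaOmegaCtx E E') {G : ECtx} (hG : G.fv = ∅) :
    ClosedBetaOmega (.reset (s.subst k (contFun (G.comp E))))
      (.reset (s'.subst k (contFun (G.comp E')))) := by
  obtain ⟨hcE, hcs⟩ := ECtx.closed_plug.1 hc
  have hGE : (G.comp E).fv = ∅ := by rw [ECtx.fv_comp, hG, hcE, Finset.union_empty]
  exact ⟨closed_reset_subst_contFun (ECtx.closed_plug.2 ⟨hGE, hcs⟩),
    (hE.comp G).betaOmega_capture hGE hs k⟩

theorem isAppSim : IsAppSim ClosedBetaOmega := by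
  rintro t t' ⟨hc, h⟩
  refine ⟨fun r hr => ?_, ?_, ?_⟩
  · obtain ⟨r', hr', hrr'⟩ := h.exists_reds_of_red_left hc hr
    exact ⟨r', hr', hr.closed hc, hrr'⟩
  · rintro x s rfl
    obtain ⟨s', rfl, hs⟩ := h.exists_of_lam
    exact ⟨s', .refl, fun v hv hvc => .subst hc hs hv hvc⟩
  · rintro E k s rfl
    obtain ⟨E', s', rfl, hs, hE⟩ := h.exists_of_plug_shift
    exact ⟨E', s', .refl, fun G hG => .capture hc hs hE hG⟩

theorem isAppSim_swap : IsAppSim (fun t' t => ClosedBetaOmega t t') := by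
  rintro t' t ⟨hc, h⟩
  refine ⟨fun r' hr' => ?_, ?_, ?_⟩
  · obtain ⟨r, hr, hrr'⟩ := h.exists_reds_of_red_right hc hr'
    exact ⟨r, hr, closed_of_reds hr hc, hrr'⟩
  · rintro x s' rfl
    obtain ⟨w, hw, hwv, hws'⟩ := h.exists_reds_isValue hc (.lam x s')
    obtain ⟨s, rfl, hs⟩ := hws'.exists_of_isValue_of_lam hwv
    exact ⟨s, hw, fun v hv hvc => .subst (closed_of_reds hw hc) hs hv hvc⟩
  · rintro E' k s' rfl
    obtain ⟨E, s, hE, hs, hEE'⟩ := h.exists_reds_plug_shift hc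
    exact ⟨E, s, hE, fun G hG => .capture (closed_of_reds hE hc) hs hEE' hG⟩

end ClosedBetaOmega

/-- The β_Ω axiom is validated by applicative bisimilarity:
for a pure context `E` with `x ∉ fv E` and a term `t` such that both sides are
closed, `(λx.E[x]) t ≈_app E[t]`. -/
theorem beta_omega_appBisim (E : ECtx) (x : ℕ) (hx : x ∉ E.fv) (t : Tm)
    (h0 : Closed (Tm.app (Tm.lam x (E.plug (Tm.var x))) t))
    (h1 : Closed (E.plug t)) :
    AppBisim (Tm.app (Tm.lam x (E.plug (Tm.var x))) t) (E.plug t) :=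
  ⟨ClosedBetaOmega, ⟨ClosedBetaOmega.isAppSim, ClosedBetaOmega.isAppSim_swap⟩,
    h0, .contract hx (.refl _)⟩

end LambdaS
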